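/- Let C ⊆ F_{q^m}^n be an arbitrary (not necessarily linear) code with at least two elements and let ρ be a nonnegative integer with ρ < d_R(C). (i) For all F_q-subspaces L, L' ⊆ F_q^n with dim_{F_q} L ≥ n − ρ and F_q^n = L' ⊕ L^⊥, letting π : F_{q^m}^n → F_{q^m}^n be the F_{q^m}-linear projection with image V_{L'} and kernel V_{L^⊥}, one has wt_R(π(c_1) − π(c_2)) ≥ d_R(C) − ρ for all distinct c_1, c_2 ∈ C. (ii) Moreover, there exist F_q-subspaces L, L' ⊆ F_q^n with dim_{F_q} L = n − ρ and F_q^n = L' ⊕ L^⊥ such that, for the corresponding projection π, min{ wt_R(π(c_1) − π(c_2)) : c_1, c_2 ∈ C, c_1 ≠ c_2 } = d_R(C) − ρ. -/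

import Mathlib

open Submodule Module

namespace RankPaper

variable {n : ℕ}

/-- The coordinatewise `q^i`-th power map on `Fqm^n`. -/
def qpowMap (q i : ℕ) {Fqm : Type} [Field Fqm] (v : Fin n → Fqm) : Fin n → Fqm :=
  fun j => v j ^ q ^ i

/-- The Galois closure `D* = Σ_{i=0}^{m-1} D^{q^i}` of a subspace (as the span of the
union of the images of `D` under the coordinatewise `q^i`-power maps, `0 ≤ i < m`). -/
def galClosure (q m : ℕ) {Fqm : Type} [Field Fqm] (D : Submodule Fqm (Fin n → Fqm)) :
    Submodule Fqm (Fin n → Fqm) :=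
  Submodule.span Fqm (⋃ i ∈ Finset.range m, qpowMap q i '' (D : Set (Fin n → Fqm)))

/-- `D` is Galois closed if `D = D*`. -/
def GaloisClosed (q m : ℕ) {Fqm : Type} [Field Fqm] (D : Submodule Fqm (Fin n → Fqm)) : Prop :=
  galClosure q m D = D

/-- Rank weight of a subspace: `wt_R(D) = dim_{Fqm} D*`. -/
noncomputable def wtR (q m : ℕ) {Fqm : Type} [Field Fqm]
    (D : Submodule Fqm (Fin n → Fqm)) : ℕ :=
  finrank Fqm (galClosure q m D)

/-- Rank weight of a vector: `wt_R(c) = wt_R(span {c})`. -/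
noncomputable def wtRv (q m : ℕ) {Fqm : Type} [Field Fqm] (c : Fin n → Fqm) : ℕ :=
  wtR q m (Submodule.span Fqm ({c} : Set (Fin n → Fqm)))

/-- Hamming weight of a subspace: the number of coordinates where some element is nonzero. -/
noncomputable def wtH {Fqm : Type} [Field Fqm] (D : Submodule Fqm (Fin n → Fqm)) : ℕ :=
  {i : Fin n | ∃ d ∈ D, d i ≠ 0}.ncard

/-- `r`-th generalized rank weight of a linear code. -/
noncomputable def dR (q m : ℕ) {Fqm : Type} [Field Fqm]
    (C : Submodule Fqm (Fin n → Fqm)) (r : ℕ) : ℕ :=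
  sInf { dv | ∃ V : Submodule Fqm (Fin n → Fqm),
    GaloisClosed q m V ∧ r ≤ finrank Fqm ↥(C ⊓ V) ∧ dv = finrank Fqm ↥V }

/-- `r`-th generalized Hamming weight of a linear code. -/
noncomputable def dH {Fqm : Type} [Field Fqm]
    (C : Submodule Fqm (Fin n → Fqm)) (r : ℕ) : ℕ :=
  sInf { w | ∃ D : Submodule Fqm (Fin n → Fqm), D ≤ C ∧ finrank Fqm ↥D = r ∧ w = wtH D }

/-- `r`-th relative generalized rank weight of a nested code pair. -/
noncomputable def MR (q m : ℕ) {Fqm : Type} [Field Fqm]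
    (C₁ C₂ : Submodule Fqm (Fin n → Fqm)) (r : ℕ) : ℕ :=
  sInf { dv | ∃ V : Submodule Fqm (Fin n → Fqm), GaloisClosed q m V ∧
    r ≤ finrank Fqm ↥(C₁ ⊓ V) - finrank Fqm ↥(C₂ ⊓ V) ∧ dv = finrank Fqm ↥V }

/-- Minimum rank distance of an arbitrary (possibly nonlinear) code. -/
noncomputable def dRset (q m : ℕ) {Fqm : Type} [Field Fqm] (C : Set (Fin n → Fqm)) : ℕ :=
  sInf { w | ∃ c₁ ∈ C, ∃ c₂ ∈ C, c₁ ≠ c₂ ∧ w = wtRv q m (c₁ - c₂) }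

/-- The linear functional `x ↦ Σ_j x_j y_j` (dot product with `y`). -/
def dotLin {K : Type} [Field K] (y : Fin n → K) : (Fin n → K) →ₗ[K] K :=
  ∑ j, y j • LinearMap.proj j

/-- Orthogonal complement of a subspace with respect to the standard bilinear form. -/
def perp {K : Type} [Field K] (L : Submodule K (Fin n → K)) : Submodule K (Fin n → K) :=
  ⨅ y ∈ L, LinearMap.ker (dotLin y)

/-- The coordinatewise inclusion `Fq^n → Fqm^n`. -/
def embFq (Fq Fqm : Type) [Field Fq] [Field Fqm] [Algebra Fq Fqm] :
    (Fin n → Fq) →ₗ[Fq] (Fin n → Fqm) :=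
  LinearMap.pi fun j => (Algebra.linearMap Fq Fqm).comp (LinearMap.proj j)

/-- `V_L = L ⊗ Fqm`, the `Fqm`-span of `L ⊆ Fq^n` inside `Fqm^n`. -/
def VL {Fq : Type} (Fqm : Type) [Field Fq] [Field Fqm] [Algebra Fq Fqm]
    (L : Submodule Fq (Fin n → Fq)) : Submodule Fqm (Fin n → Fqm) :=
  Submodule.span Fqm (embFq Fq Fqm '' (L : Set (Fin n → Fq)))

/-- Rank-punctured code `C^L`: the image of `C` in `Fqm^n / V_{L^⊥}`. -/
noncomputable def punct {Fq Fqm : Type} [Field Fq] [Field Fqm] [Algebra Fq Fqm]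
    (L : Submodule Fq (Fin n → Fq)) (C : Submodule Fqm (Fin n → Fqm)) :
    Submodule Fqm ((Fin n → Fqm) ⧸ VL Fqm (perp L)) :=
  Submodule.map (VL Fqm (perp L)).mkQ C

/-!
Taking Galois closures commutes with an idempotent `π` whose range and kernel are Galois closed, so
rank–nullity gives `wt_R(π c) = wt_R(c) - dim (⟨c⟩* ∩ ker π)`. For `ker π = V_M` the loss is at most
`dim V_M = dim M`. By Galois descent `⟨c⟩* = V_N` for some `N ⊆ F_q^n`, so if `c` is a difference of
codewords of minimum rank weight, every `ρ`-dimensional `M ⊆ N` realises the loss `ρ` exactly.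
-/

section LinearAlgebra

theorem exists_le_finrank_eq {K V : Type*} [DivisionRing K] [AddCommGroup V] [Module K V]
    (M : Submodule K V) {r : ℕ} (hr : r ≤ finrank K M) : ∃ N ≤ M, finrank K N = r := by
  obtain ⟨s, hs, hli⟩ := exists_finset_linearIndependent_of_le_finrank hr
  refine ⟨(span K (s : Set M)).map M.subtype, map_subtype_le _ _, ?_⟩
  rw [finrank_map_subtype_eq, finrank_span_finset_eq_card hli, hs]

theorem finrank_map_add_finrank_inf_ker {K V W : Type*} [DivisionRing K] [AddCommGroup V]
    [Module K V] [AddCommGroup W] [Module K W] (f : V →ₗ[K] W) (G : Submodule K V)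
    [FiniteDimensional K G] :
    finrank K (G.map f) + finrank K ↥(G ⊓ LinearMap.ker f) = finrank K G := by
  rw [← map_comap_subtype, finrank_map_subtype_eq, ← LinearMap.range_domRestrict,
    ← LinearMap.ker_domRestrict]
  exact (f.domRestrict G).finrank_range_add_finrank_ker

theorem map_comm_of_isIdempotentElem {R V : Type*} [Ring R] [AddCommGroup V] [Module R V]
    {π : V →ₗ[R] V} (hπ : IsIdempotentElem π) {f : V →+ V}
    (hrange : ∀ v ∈ LinearMap.range π, f v ∈ LinearMap.range π)
    (hker : ∀ v ∈ LinearMap.ker π, f v ∈ LinearMap.ker π) (v : V) : π (f v) = f (π v) := by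
  have hsub : v - π v ∈ LinearMap.ker π := by
    rw [LinearMap.sub_mem_ker_iff]
    exact (LinearMap.congr_fun hπ v).symm
  calc π (f v) = π (f (π v)) := by
        rw [← LinearMap.sub_mem_ker_iff, ← map_sub]
        exact hker _ hsub
    _ = f (π v) :=
        (LinearMap.IsIdempotentElem.mem_range_iff hπ).1 (hrange _ (LinearMap.mem_range_self π v))

end LinearAlgebra

section Perp

variable {K : Type} [Field K]

theorem perp_eq_orthogonal (L : Submodule K (Fin n → K)) :
    perp L = LinearMap.BilinForm.orthogonal (dotProductBilin K K) L := by
  ext x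
  simp [perp, dotLin, LinearMap.BilinForm.mem_orthogonal_iff, dotProduct]

theorem isRefl_dotProductBilin :
    LinearMap.BilinForm.IsRefl (dotProductBilin K K : LinearMap.BilinForm K (Fin n → K)) :=
  fun x y h => (dotProduct_comm y x).trans h

theorem nondegenerate_dotProductBilin :
    (dotProductBilin K K : LinearMap.BilinForm K (Fin n → K)).Nondegenerate :=
  ⟨dotProduct_eq_zero, fun y hy => dotProduct_eq_zero y fun x => (dotProduct_comm y x).trans (hy x)⟩

theorem finrank_perp (L : Submodule K (Fin n → K)) : finrank K (perp L) = n - finrank K L := by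
  rw [perp_eq_orthogonal, LinearMap.BilinForm.finrank_orthogonal nondegenerate_dotProductBilin,
    finrank_fin_fun]

theorem perp_perp (L : Submodule K (Fin n → K)) : perp (perp L) = L := by
  simp only [perp_eq_orthogonal]
  exact LinearMap.BilinForm.orthogonal_orthogonal nondegenerate_dotProductBilin
    isRefl_dotProductBilin L

end Perp

section ExtensionOfScalars

variable {Fq Fqm : Type} [Field Fq] [Field Fqm] [Algebra Fq Fqm]

@[simp]
theorem embFq_apply (x : Fin n → Fq) (j : Fin n) :
    embFq Fq Fqm x j = algebraMap Fq Fqm (x j) := rfl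

theorem embFq_mem_VL {L : Submodule Fq (Fin n → Fq)} {x : Fin n → Fq} (hx : x ∈ L) :
    embFq Fq Fqm x ∈ VL Fqm L :=
  subset_span ⟨x, hx, rfl⟩

theorem VL_mono {L M : Submodule Fq (Fin n → Fq)} (h : L ≤ M) : VL Fqm L ≤ VL Fqm M :=
  span_mono (Set.image_mono h)

theorem VL_span (s : Set (Fin n → Fq)) : VL Fqm (span Fq s) = span Fqm (embFq Fq Fqm '' s) := by
  rw [VL, ← map_coe, map_span, span_span_of_tower]

theorem VL_sup (L M : Submodule Fq (Fin n → Fq)) : VL Fqm (L ⊔ M) = VL Fqm L ⊔ VL Fqm M := by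
  conv_lhs => rw [← span_eq L, ← span_eq M, ← span_union, VL_span, Set.image_union, span_union]
  rfl

theorem VL_top : VL Fqm (⊤ : Submodule Fq (Fin n → Fq)) = ⊤ := by
  rw [← (Pi.basisFun Fq (Fin n)).span_eq, VL_span, ← Set.range_comp,
    ← (Pi.basisFun Fqm (Fin n)).span_eq]
  congr 2
  ext i j
  simp [Pi.single_apply, apply_ite]

theorem finrank_VL_le (L : Submodule Fq (Fin n → Fq)) :
    finrank Fqm (VL Fqm L) ≤ finrank Fq L := by
  let b := finBasis Fq L
  have hb : span Fq (Set.range fun i => (b i : Fin n → Fq)) = L := by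
    rw [Set.range_comp' Subtype.val b, ← coe_subtype, ← map_span, b.span_eq, map_subtype_top]
  have hVL : VL Fqm L = span Fqm (Set.range fun i => embFq Fq Fqm (b i : Fin n → Fq)) := by
    conv_lhs => rw [← hb, VL_span, ← Set.range_comp']
  rw [hVL]
  exact (finrank_range_le_card _).trans_eq (Fintype.card_fin _)

theorem finrank_VL (L : Submodule Fq (Fin n → Fq)) : finrank Fqm (VL Fqm L) = finrank Fq L := by
  obtain ⟨M, hLM⟩ := Submodule.exists_isCompl L
  have hsup : n ≤ finrank Fqm (VL Fqm L) + finrank Fqm (VL Fqm M) := by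
    have hle := finrank_add_le_finrank_add_finrank (VL Fqm L) (VL Fqm M)
    rwa [← VL_sup, hLM.sup_eq_top, VL_top, finrank_top, finrank_fin_fun] at hle
  have hdim : finrank Fq L + finrank Fq M = n := by
    simpa using finrank_add_eq_of_isCompl hLM
  have hL := finrank_VL_le (Fqm := Fqm) L
  have hM := finrank_VL_le (Fqm := Fqm) M
  omega

theorem isCompl_VL {L M : Submodule Fq (Fin n → Fq)} (h : IsCompl L M) :
    IsCompl (VL Fqm L) (VL Fqm M) := by
  have hsup : VL Fqm L ⊔ VL Fqm M = ⊤ := by rw [← VL_sup, h.sup_eq_top, VL_top]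
  refine ⟨?_, codisjoint_iff.2 hsup⟩
  have hdim := finrank_sup_add_finrank_inf_eq (VL Fqm L) (VL Fqm M)
  rw [hsup, finrank_VL, finrank_VL, finrank_add_eq_of_isCompl h, finrank_top, finrank_fin_fun,
    finrank_fin_fun] at hdim
  rw [disjoint_iff, ← finrank_eq_zero (R := Fqm)]
  omega

end ExtensionOfScalars

section GaloisClosure

variable {F : Type} [Field F] {q m : ℕ} {D W : Submodule F (Fin n → F)}

theorem galClosure_le_iff :
    galClosure q m D ≤ W ↔ ∀ i < m, ∀ v ∈ D, qpowMap q i v ∈ W := by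
  simp only [galClosure, span_le, Set.iUnion_subset_iff, Finset.mem_range, Set.image_subset_iff]
  rfl

theorem qpowMap_mem_galClosure {i : ℕ} (hi : i < m) {v : Fin n → F} (hv : v ∈ D) :
    qpowMap q i v ∈ galClosure q m D :=
  galClosure_le_iff.1 le_rfl i hi v hv

theorem GaloisClosed.qpowMap_mem (hD : GaloisClosed q m D) {i : ℕ} (hi : i < m)
    {v : Fin n → F} (hv : v ∈ D) : qpowMap q i v ∈ D :=
  galClosure_le_iff.1 hD.le i hi v hv

theorem qpowMap_zero_left (v : Fin n → F) : qpowMap q 0 v = v := by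
  ext j
  simp [qpowMap]

theorem qpowMap_qpowMap (i k : ℕ) (v : Fin n → F) :
    qpowMap q i (qpowMap q k v) = qpowMap q (k + i) v := by
  ext j
  simp [qpowMap, pow_add, pow_mul]

theorem galoisClosed_of_forall_qpowMap_mem (hm : 0 < m)
    (h : ∀ i < m, ∀ v ∈ D, qpowMap q i v ∈ D) : GaloisClosed q m D :=
  le_antisymm (galClosure_le_iff.2 h) fun v hv =>
    qpowMap_zero_left (q := q) v ▸ qpowMap_mem_galClosure hm hv

theorem galClosure_map {n' : ℕ} {f : (Fin n → F) →ₗ[F] (Fin n' → F)}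
    (hf : ∀ i < m, ∀ v, f (qpowMap q i v) = qpowMap q i (f v)) :
    galClosure q m (D.map f) = (galClosure q m D).map f := by
  refine le_antisymm (galClosure_le_iff.2 ?_) (map_le_iff_le_comap.2 (galClosure_le_iff.2 ?_))
  · rintro i hi _ ⟨v, hv, rfl⟩
    exact ⟨_, qpowMap_mem_galClosure hi hv, hf i hi v⟩
  · intro i hi v hv
    rw [mem_comap, hf i hi]
    exact qpowMap_mem_galClosure hi (mem_map_of_mem hv)

theorem wtRv_add_finrank_inf_ker {n' : ℕ} {f : (Fin n → F) →ₗ[F] (Fin n' → F)}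
    (hf : ∀ i < m, ∀ v, f (qpowMap q i v) = qpowMap q i (f v)) (c : Fin n → F) :
    wtRv q m (f c) + finrank F ↥(galClosure q m (span F {c}) ⊓ LinearMap.ker f) =
      wtRv q m c := by
  have hspan : span F {f c} = (span F {c}).map f := by rw [map_span, Set.image_singleton]
  rw [wtRv, wtR, hspan, galClosure_map hf]
  exact finrank_map_add_finrank_inf_ker f _

end GaloisClosure

section Frobenius

variable (Fq : Type) {Fqm : Type} [Field Fq] [Field Fqm] [Algebra Fq Fqm] [Finite Fq]

/-- The `i`-th iterate `x ↦ x ^ |Fq| ^ i` of the relative Frobenius of `Fqm` over `Fq`. -/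
noncomputable def qpowRingHom (Fqm : Type) [Field Fqm] [Algebra Fq Fqm] (i : ℕ) : Fqm →+* Fqm :=
  letI := Fintype.ofFinite Fq
  (FiniteField.frobeniusAlgHom Fq Fqm ^ i : Fqm →ₐ[Fq] Fqm).toRingHom

theorem qpowRingHom_apply (i : ℕ) (x : Fqm) : qpowRingHom Fq Fqm i x = x ^ Nat.card Fq ^ i := by
  let := Fintype.ofFinite Fq
  simp [qpowRingHom, FiniteField.coe_frobeniusAlgHom, pow_iterate]

/-- `qpowMap (Nat.card Fq) i` bundled as a map semilinear over the iterated Frobenius, so that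
stability of a span under it can be checked on generators. -/
noncomputable def qpowSemilinear (i : ℕ) :
    (Fin n → Fqm) →ₛₗ[qpowRingHom Fq Fqm i] (Fin n → Fqm) where
  toFun := qpowMap (Nat.card Fq) i
  map_add' v w := by
    ext j
    simp [qpowMap, ← qpowRingHom_apply]
  map_smul' a v := by
    ext j
    simp [qpowMap, ← qpowRingHom_apply]

variable {Fq}

theorem qpowMap_embFq (i : ℕ) (x : Fin n → Fq) :
    qpowMap (Nat.card Fq) i (embFq Fq Fqm x) = embFq Fq Fqm x := by
  let := Fintype.ofFinite Fq
  ext j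
  rw [qpowMap, embFq_apply, ← map_pow, Nat.card_eq_fintype_card, FiniteField.pow_card_pow]

theorem map_qpowMap_of_galoisClosed {m : ℕ} {π : (Fin n → Fqm) →ₗ[Fqm] (Fin n → Fqm)}
    (hπ : IsIdempotentElem π) (hrange : GaloisClosed (Nat.card Fq) m (LinearMap.range π))
    (hker : GaloisClosed (Nat.card Fq) m (LinearMap.ker π)) :
    ∀ i < m, ∀ v, π (qpowMap (Nat.card Fq) i v) = qpowMap (Nat.card Fq) i (π v) :=
  fun i hi => map_comm_of_isIdempotentElem hπ (f := (qpowSemilinear Fq i).toAddMonoidHom)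
    (fun _ => hrange.qpowMap_mem hi) (fun _ => hker.qpowMap_mem hi)

variable [FiniteDimensional Fq Fqm]

theorem galoisClosed_VL (L : Submodule Fq (Fin n → Fq)) :
    GaloisClosed (Nat.card Fq) (finrank Fq Fqm) (VL Fqm L) := by
  refine galoisClosed_of_forall_qpowMap_mem finrank_pos fun i _ => ?_
  have hle : VL Fqm L ≤ (VL Fqm L).comap (qpowSemilinear Fq i) := by
    rw [VL, span_le]
    rintro _ ⟨x, hx, rfl⟩
    change qpowMap _ i (embFq Fq Fqm x) ∈ VL Fqm L
    rw [qpowMap_embFq]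
    exact embFq_mem_VL hx
  exact fun v hv => hle hv

theorem qpowMap_finrank (v : Fin n → Fqm) :
    qpowMap (Nat.card Fq) (finrank Fq Fqm) v = v := by
  have := Module.finite_of_finite Fq (M := Fqm)
  let := Fintype.ofFinite Fqm
  ext j
  rw [qpowMap, ← natCard_eq_pow_finrank, Nat.card_eq_fintype_card, FiniteField.pow_card]

theorem qpowMap_mod_finrank (i : ℕ) (v : Fin n → Fqm) :
    qpowMap (Nat.card Fq) (i % finrank Fq Fqm) v = qpowMap (Nat.card Fq) i v := by
  have hperiodic : Function.Periodic (fun k => qpowMap (Nat.card Fq) k v) (finrank Fq Fqm) :=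
    fun k => by simp only [← qpowMap_qpowMap, qpowMap_finrank]
  exact hperiodic.map_mod_nat i

theorem galoisClosed_galClosure (D : Submodule Fqm (Fin n → Fqm)) :
    GaloisClosed (Nat.card Fq) (finrank Fq Fqm)
      (galClosure (Nat.card Fq) (finrank Fq Fqm) D) := by
  refine galoisClosed_of_forall_qpowMap_mem finrank_pos fun i _ => ?_
  set G := galClosure (Nat.card Fq) (finrank Fq Fqm) D
  have hle : G ≤ G.comap (qpowSemilinear Fq i) := galClosure_le_iff.2 fun k _ d hd => by
    change qpowMap _ i (qpowMap _ k d) ∈ G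
    rw [qpowMap_qpowMap, ← qpowMap_mod_finrank]
    exact qpowMap_mem_galClosure (Nat.mod_lt _ finrank_pos) hd
  exact fun v hv => hle hv

end Frobenius

section Descent

variable (Fq : Type) {Fqm : Type} [Field Fq] [Field Fqm] [Algebra Fq Fqm]

/-- The `Fq`-rational points `G ∩ Fq^n` of a subspace `G` of `Fqm^n`, as a subspace of `Fq^n`. -/
def rationalPoints (G : Submodule Fqm (Fin n → Fqm)) : Submodule Fq (Fin n → Fq) :=
  (G.restrictScalars Fq).comap (embFq Fq Fqm)

theorem VL_rationalPoints_le (G : Submodule Fqm (Fin n → Fqm)) :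
    VL Fqm (rationalPoints Fq G) ≤ G := by
  rw [VL, span_le]
  rintro _ ⟨x, hx, rfl⟩
  exact hx

/-- The coordinatewise trace `Fqm^n → Fq^n`. -/
noncomputable def traceVec (v : Fin n → Fqm) : Fin n → Fq :=
  fun j => Algebra.trace Fq Fqm (v j)

theorem sum_traceDual_smul_embFq_traceVec [FiniteDimensional Fq Fqm] [Algebra.IsSeparable Fq Fqm]
    {ι : Type*} [Fintype ι] [DecidableEq ι] (b : Basis ι Fq Fqm) (v : Fin n → Fqm) :
    ∑ i, b.traceDual i • embFq Fq Fqm (traceVec Fq (b i • v)) = v := by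
  ext j
  conv_rhs => rw [← b.traceDual.sum_repr (v j)]
  simp [traceVec, Algebra.smul_def, mul_comm, Algebra.traceForm_apply]

variable {Fq} [Finite Fq] [FiniteDimensional Fq Fqm]

theorem embFq_traceVec (v : Fin n → Fqm) :
    embFq Fq Fqm (traceVec Fq v) =
      ∑ k ∈ Finset.range (finrank Fq Fqm), qpowMap (Nat.card Fq) k v := by
  have := Module.finite_of_finite Fq (M := Fqm)
  ext j
  simp [traceVec, FiniteField.algebraMap_trace_eq_sum_pow, qpowMap]

theorem GaloisClosed.traceVec_mem_rationalPoints {G : Submodule Fqm (Fin n → Fqm)}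
    (hG : GaloisClosed (Nat.card Fq) (finrank Fq Fqm) G) {v : Fin n → Fqm} (hv : v ∈ G) :
    traceVec Fq v ∈ rationalPoints Fq G := by
  change embFq Fq Fqm (traceVec Fq v) ∈ G
  rw [embFq_traceVec]
  exact sum_mem fun k hk => hG.qpowMap_mem (Finset.mem_range.1 hk) hv

theorem GaloisClosed.VL_rationalPoints {G : Submodule Fqm (Fin n → Fqm)}
    (hG : GaloisClosed (Nat.card Fq) (finrank Fq Fqm) G) : VL Fqm (rationalPoints Fq G) = G := by
  refine le_antisymm (VL_rationalPoints_le Fq G) fun v hv => ?_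
  rw [← sum_traceDual_smul_embFq_traceVec Fq (finBasis Fq Fqm) v]
  exact sum_mem fun i _ => smul_mem _ _ <|
    embFq_mem_VL (hG.traceVec_mem_rationalPoints (smul_mem _ _ hv))

end Descent

section MinimumDistance

variable {F : Type} [Field F] {q m : ℕ} {C : Set (Fin n → F)}

theorem dRset_le_wtRv_sub {c₁ c₂ : Fin n → F} (h₁ : c₁ ∈ C) (h₂ : c₂ ∈ C) (hne : c₁ ≠ c₂) :
    dRset q m C ≤ wtRv q m (c₁ - c₂) :=
  Nat.sInf_le ⟨c₁, h₁, c₂, h₂, hne, rfl⟩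

theorem exists_dRset_eq_wtRv_sub (hC : C.Nontrivial) :
    ∃ c₁ ∈ C, ∃ c₂ ∈ C, c₁ ≠ c₂ ∧ dRset q m C = wtRv q m (c₁ - c₂) := by
  obtain ⟨x, hx, y, hy, hxy⟩ := hC
  exact Nat.sInf_mem (s := {w | ∃ c₁ ∈ C, ∃ c₂ ∈ C, c₁ ≠ c₂ ∧ w = wtRv q m (c₁ - c₂)})
    ⟨_, x, hx, y, hy, hxy, rfl⟩

end MinimumDistance

section Puncturing

variable {Fq Fqm : Type} [Field Fq] [Field Fqm] [Algebra Fq Fqm] [Finite Fq]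
  [FiniteDimensional Fq Fqm]

theorem wtRv_projection_add_finrank_inf {L' M : Submodule Fq (Fin n → Fq)}
    {π : (Fin n → Fqm) →ₗ[Fqm] (Fin n → Fqm)} (hπ : π.comp π = π)
    (hrange : LinearMap.range π = VL Fqm L') (hker : LinearMap.ker π = VL Fqm M)
    (c : Fin n → Fqm) :
    wtRv (Nat.card Fq) (finrank Fq Fqm) (π c) +
        finrank Fqm ↥(galClosure (Nat.card Fq) (finrank Fq Fqm) (span Fqm {c}) ⊓ VL Fqm M) =
      wtRv (Nat.card Fq) (finrank Fq Fqm) c := by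
  rw [← hker]
  exact wtRv_add_finrank_inf_ker (map_qpowMap_of_galoisClosed hπ
    (hrange ▸ galoisClosed_VL L') (hker ▸ galoisClosed_VL M)) c

theorem wtRv_le_wtRv_projection_add_finrank {L' M : Submodule Fq (Fin n → Fq)}
    {π : (Fin n → Fqm) →ₗ[Fqm] (Fin n → Fqm)} (hπ : π.comp π = π)
    (hrange : LinearMap.range π = VL Fqm L') (hker : LinearMap.ker π = VL Fqm M)
    (c : Fin n → Fqm) :
    wtRv (Nat.card Fq) (finrank Fq Fqm) c ≤
      wtRv (Nat.card Fq) (finrank Fq Fqm) (π c) + finrank Fq M := by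
  rw [← wtRv_projection_add_finrank_inf hπ hrange hker c, ← finrank_VL (Fqm := Fqm) M]
  exact Nat.add_le_add_left (finrank_mono inf_le_right) _

theorem dRset_sub_le_wtRv_projection_sub {ρ : ℕ} {L' M : Submodule Fq (Fin n → Fq)}
    {π : (Fin n → Fqm) →ₗ[Fqm] (Fin n → Fqm)} (hπ : π.comp π = π)
    (hrange : LinearMap.range π = VL Fqm L') (hker : LinearMap.ker π = VL Fqm M)
    (hM : finrank Fq M ≤ ρ) {C : Set (Fin n → Fqm)} {c₁ c₂ : Fin n → Fqm} (h₁ : c₁ ∈ C)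
    (h₂ : c₂ ∈ C) (hne : c₁ ≠ c₂) :
    dRset (Nat.card Fq) (finrank Fq Fqm) C - ρ ≤
      wtRv (Nat.card Fq) (finrank Fq Fqm) (π c₁ - π c₂) := by
  rw [← map_sub, Nat.sub_le_iff_le_add]
  calc dRset (Nat.card Fq) (finrank Fq Fqm) C
      ≤ wtRv (Nat.card Fq) (finrank Fq Fqm) (c₁ - c₂) := dRset_le_wtRv_sub h₁ h₂ hne
    _ ≤ wtRv (Nat.card Fq) (finrank Fq Fqm) (π (c₁ - c₂)) + finrank Fq M :=
        wtRv_le_wtRv_projection_add_finrank hπ hrange hker _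
    _ ≤ _ := Nat.add_le_add_left hM _

theorem exists_projection_wtRv_add_eq (c : Fin n → Fqm) {ρ : ℕ}
    (hρ : ρ ≤ wtRv (Nat.card Fq) (finrank Fq Fqm) c) :
    ∃ (M L' : Submodule Fq (Fin n → Fq)) (π : (Fin n → Fqm) →ₗ[Fqm] (Fin n → Fqm)),
      finrank Fq M = ρ ∧ IsCompl L' M ∧ π.comp π = π ∧
      LinearMap.range π = VL Fqm L' ∧ LinearMap.ker π = VL Fqm M ∧
      wtRv (Nat.card Fq) (finrank Fq Fqm) (π c) + ρ = wtRv (Nat.card Fq) (finrank Fq Fqm) c := by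
  set G := galClosure (Nat.card Fq) (finrank Fq Fqm) (span Fqm {c})
  have hdescent : VL Fqm (rationalPoints Fq G) = G :=
    (galoisClosed_galClosure _).VL_rationalPoints
  obtain ⟨M, hMG, hM⟩ : ∃ M ≤ rationalPoints Fq G, finrank Fq M = ρ :=
    exists_le_finrank_eq _ (by rwa [← finrank_VL (Fqm := Fqm), hdescent])
  obtain ⟨L', hML'⟩ := Submodule.exists_isCompl M
  have hcompl : IsCompl (VL Fqm L') (VL Fqm M) := isCompl_VL hML'.symm
  have hπ := isIdempotentElem_projection hcompl
  have hrange := range_projection hcompl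
  have hker := ker_projection hcompl
  refine ⟨M, L', projection _ _ hcompl, hM, hML'.symm, hπ, hrange, hker, ?_⟩
  have hVM : VL Fqm M ≤ G := (VL_mono hMG).trans_eq hdescent
  rw [← wtRv_projection_add_finrank_inf hπ hrange hker c, inf_eq_right.2 hVM, finrank_VL, hM]

end Puncturing

/-- rank-puncturing an arbitrary code with `ρ < d_R(C)` decreases the
minimum rank distance by at most `ρ`, and by exactly `ρ` for a suitable choice. -/
theorem stmt17 (q m n ρ : ℕ) (Fq Fqm : Type) [Field Fq] [Field Fqm] [Algebra Fq Fqm]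
    [Finite Fqm] (hq : Nat.card Fq = q) (hm : finrank Fq Fqm = m)
    (C : Set (Fin n → Fqm)) (hC : C.Nontrivial) (hρ : ρ < dRset q m C) :
    (∀ L L' : Submodule Fq (Fin n → Fq), n - ρ ≤ finrank Fq L → IsCompl L' (perp L) →
      ∀ π : (Fin n → Fqm) →ₗ[Fqm] (Fin n → Fqm), π.comp π = π →
        LinearMap.range π = VL Fqm L' → LinearMap.ker π = VL Fqm (perp L) →
        ∀ c₁ ∈ C, ∀ c₂ ∈ C, c₁ ≠ c₂ →
          dRset q m C - ρ ≤ wtRv q m (π c₁ - π c₂)) ∧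
    (∃ (L L' : Submodule Fq (Fin n → Fq)) (π : (Fin n → Fqm) →ₗ[Fqm] (Fin n → Fqm)),
      finrank Fq L = n - ρ ∧ IsCompl L' (perp L) ∧ π.comp π = π ∧
      LinearMap.range π = VL Fqm L' ∧ LinearMap.ker π = VL Fqm (perp L) ∧
      sInf { w | ∃ c₁ ∈ C, ∃ c₂ ∈ C, c₁ ≠ c₂ ∧ w = wtRv q m (π c₁ - π c₂) }
        = dRset q m C - ρ) := by
  subst hq hm
  have : Finite Fq := .of_injective _ (FaithfulSMul.algebraMap_injective Fq Fqm)
  refine ⟨fun L L' hL _ π hπ hrange hker c₁ h₁ c₂ h₂ hne => ?_, ?_⟩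
  · have hperp : finrank Fq (perp L) ≤ ρ := by rw [finrank_perp]; omega
    exact dRset_sub_le_wtRv_projection_sub hπ hrange hker hperp h₁ h₂ hne
  · obtain ⟨c₁, h₁, c₂, h₂, hne, hd⟩ :=
      exists_dRset_eq_wtRv_sub (q := Nat.card Fq) (m := finrank Fq Fqm) hC
    obtain ⟨M, L', π, hM, hcompl, hπ, hrange, hker, hwt⟩ :=
      exists_projection_wtRv_add_eq (c₁ - c₂) (hρ.le.trans_eq hd)
    refine ⟨perp M, L', π, by rw [finrank_perp, hM], by rwa [perp_perp], hπ, hrange,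
      by rwa [perp_perp], IsLeast.csInf_eq ⟨⟨c₁, h₁, c₂, h₂, hne, ?_⟩, ?_⟩⟩
    · rw [← map_sub, hd, ← hwt, Nat.add_sub_cancel]
    · rintro _ ⟨a, ha, b, hb, hab, rfl⟩
      exact dRset_sub_le_wtRv_projection_sub hπ hrange hker hM.le ha hb hab

end RankPaper
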